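/- arXiv:1411.4836 — 2 statements merged into one kernel-verified Lean document; each statement's English description precedes it below -/
import Mathlib

section
/- Let W be uniformly distributed on {1,...,M} and independent of a codebook C = (Y^N(1),...,Y^N(M)) of arbitrarily jointly distributed 𝒴^N-valued random vectors. Let Z^N be a 𝒵^N-valued random vector that is conditionally independent of (W, C) given Y^N(W). Then I(W; Z^N, Y^N(1),...,Y^N(M)) ≤ H(Z^N) − H(Z^N | Y^N(W)). -/
open MeasureTheory Finset

/-- Probability that the random variable `X` takes the value `x`. -/
noncomputable def prMass {Ω α : Type*} [MeasurableSpace Ω] (μ : Measure Ω)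
    (X : Ω → α) (x : α) : ℝ :=
  (μ {ω | X ω = x}).toReal

/-- Shannon entropy (in bits) of a random variable with values in a finite alphabet. -/
noncomputable def entropy2 {Ω α : Type*} [MeasurableSpace Ω] [Fintype α]
    (μ : Measure Ω) (X : Ω → α) : ℝ :=
  -∑ x : α, prMass μ X x * Real.logb 2 (prMass μ X x)

/-- Conditional entropy (in bits) `H(X|Y) = H(X,Y) - H(Y)`. -/
noncomputable def condEntropy2 {Ω α β : Type*} [MeasurableSpace Ω] [Fintype α] [Fintype β]
    (μ : Measure Ω) (X : Ω → α) (Y : Ω → β) : ℝ :=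
  entropy2 μ (fun ω => (X ω, Y ω)) - entropy2 μ Y

/-- Mutual information (in bits) `I(X;Y) = H(X) + H(Y) - H(X,Y)`. -/
noncomputable def mutualInfo2 {Ω α β : Type*} [MeasurableSpace Ω] [Fintype α] [Fintype β]
    (μ : Measure Ω) (X : Ω → α) (Y : Ω → β) : ℝ :=
  entropy2 μ X + entropy2 μ Y - entropy2 μ (fun ω => (X ω, Y ω))

section Entropy

variable {Ω α β : Type*} [MeasurableSpace Ω] {μ : Measure Ω}

lemma prMass_nonneg (X : Ω → α) (x : α) : 0 ≤ prMass μ X x :=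
  ENNReal.toReal_nonneg

variable [IsProbabilityMeasure μ]

lemma prMass_le_prMass_comp (X : Ω → α) (f : α → β) (x : α) :
    prMass μ X x ≤ prMass μ (fun ω => f (X ω)) (f x) :=
  measureReal_mono fun _ hω => congrArg f hω

lemma prMass_comp_ne_zero {X : Ω → α} {x : α} (hx : 0 < prMass μ X x) (f : α → β) :
    prMass μ (fun ω => f (X ω)) (f x) ≠ 0 :=
  (hx.trans_le (prMass_le_prMass_comp X f x)).ne'

lemma prMass_comp_eq_sum [Fintype α] [MeasurableSpace α] [MeasurableSingletonClass α]
    [DecidableEq β] {X : Ω → α} (hX : Measurable X) (f : α → β) (y : β) :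
    prMass μ (fun ω => f (X ω)) y = ∑ x with f x = y, prMass μ X x := by
  have hset : {ω | f (X ω) = y} = ⋃ x ∈ univ.filter (fun x => f x = y), {ω | X ω = x} := by
    ext ω
    simp
  change μ.real _ = ∑ x with f x = y, μ.real _
  rw [hset]
  refine measureReal_biUnion_finset ?_ fun x _ => hX (measurableSet_singleton x)
  intro x _ x' _ hne
  exact Set.disjoint_left.2 fun ω h h' => hne (h.symm.trans h')

lemma sum_prMass [Fintype α] [MeasurableSpace α] [MeasurableSingletonClass α]
    {X : Ω → α} (hX : Measurable X) : ∑ x, prMass μ X x = 1 := by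
  have h := prMass_comp_eq_sum (μ := μ) hX (fun _ => ()) ()
  simpa [prMass] using h.symm

/-- The entropy of `f(X)` as an expectation over the law of `X`. -/
lemma entropy2_comp_eq_sum [Fintype α] [MeasurableSpace α] [MeasurableSingletonClass α]
    [Fintype β] {X : Ω → α} (hX : Measurable X) (f : α → β) :
    entropy2 μ (fun ω => f (X ω))
      = -∑ x, prMass μ X x * Real.logb 2 (prMass μ (fun ω => f (X ω)) (f x)) := by
  classical
  rw [entropy2, ← Finset.sum_fiberwise univ f]
  congr 1
  refine Finset.sum_congr rfl fun y _ => ?_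
  nth_rewrite 1 [prMass_comp_eq_sum hX f y]
  rw [Finset.sum_mul]
  refine Finset.sum_congr rfl fun x hx => ?_
  rw [(Finset.mem_filter.1 hx).2]

lemma mul_log_sub_log_le {p q : ℝ} (hp : 0 ≤ p) (hq : 0 ≤ q) (hpq : 0 < p → 0 < q) :
    p * (Real.log q - Real.log p) ≤ q - p := by
  rcases hp.eq_or_lt with rfl | hp
  · simpa using hq
  · have hq := hpq hp
    rw [← Real.log_div hq.ne' hp.ne']
    calc p * Real.log (q / p) ≤ p * (q / p - 1) := by
          gcongr
          exact Real.log_le_sub_one_of_pos (div_pos hq hp)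
      _ = q - p := by field_simp

/-- Subadditivity of entropy. -/
lemma entropy2_prod_le [Fintype α] [MeasurableSpace α] [MeasurableSingletonClass α]
    [Fintype β] [MeasurableSpace β] [MeasurableSingletonClass β]
    {X : Ω → α} {Y : Ω → β} (hX : Measurable X) (hY : Measurable Y) :
    entropy2 μ (fun ω => (X ω, Y ω)) ≤ entropy2 μ X + entropy2 μ Y := by
  have hXY : Measurable fun ω => (X ω, Y ω) := hX.prodMk hY
  have h₁ := entropy2_comp_eq_sum (μ := μ) hXY Prod.fst
  have h₂ := entropy2_comp_eq_sum (μ := μ) hXY Prod.snd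
  dsimp only at h₁ h₂
  have hpos (t : α × β) (ht : 0 < prMass μ (fun ω => (X ω, Y ω)) t) :
      0 < prMass μ X t.1 ∧ 0 < prMass μ Y t.2 :=
    ⟨ht.trans_le (prMass_le_prMass_comp _ Prod.fst t),
      ht.trans_le (prMass_le_prMass_comp _ Prod.snd t)⟩
  have hsum : ∑ t : α × β, prMass μ X t.1 * prMass μ Y t.2 = 1 := by
    rw [Fintype.sum_prod_type, ← Finset.sum_mul_sum, sum_prMass hX, sum_prMass hY, one_mul]
  have key : ∑ t : α × β, prMass μ (fun ω => (X ω, Y ω)) t *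
      (Real.logb 2 (prMass μ X t.1) + Real.logb 2 (prMass μ Y t.2)
        - Real.logb 2 (prMass μ (fun ω => (X ω, Y ω)) t)) ≤ 0 := by
    calc _ ≤ ∑ t : α × β, (prMass μ X t.1 * prMass μ Y t.2
          - prMass μ (fun ω => (X ω, Y ω)) t) / Real.log 2 := by
          refine Finset.sum_le_sum fun t _ => ?_
          have h := mul_log_sub_log_le (prMass_nonneg (μ := μ) (fun ω => (X ω, Y ω)) t)
            (mul_nonneg (prMass_nonneg (μ := μ) X t.1) (prMass_nonneg (μ := μ) Y t.2))
            fun ht => mul_pos (hpos t ht).1 (hpos t ht).2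
          rcases (prMass_nonneg (μ := μ) (fun ω => (X ω, Y ω)) t).eq_or_lt with h0 | h0
          · rw [← h0] at h ⊢
            rw [zero_mul] at h ⊢
            exact div_nonneg h (Real.log_nonneg one_le_two)
          · rw [Real.log_mul (hpos t h0).1.ne' (hpos t h0).2.ne'] at h
            simp only [Real.logb, ← add_div, ← sub_div, ← mul_div_assoc]
            exact div_le_div_of_nonneg_right h (Real.log_nonneg one_le_two)
      _ = 0 := by
          rw [← Finset.sum_div, Finset.sum_sub_distrib, hsum, sum_prMass hXY, sub_self, zero_div]
  rw [h₁, h₂, entropy2]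
  simp only [mul_sub, mul_add, Finset.sum_sub_distrib, Finset.sum_add_distrib] at key
  linarith

end Entropy

/-- `I(W; Z^N, Y^N(1),...,Y^N(M)) ≤ H(Z^N) − H(Z^N | Y^N(W))`. -/
theorem stmt1
    {Ω 𝒴 𝒵 : Type*} [MeasurableSpace Ω]
    [Fintype 𝒴] [MeasurableSpace 𝒴] [MeasurableSingletonClass 𝒴]
    [Fintype 𝒵] [MeasurableSpace 𝒵] [MeasurableSingletonClass 𝒵]
    (μ : Measure Ω) [IsProbabilityMeasure μ]
    (M N : ℕ) (hM : 0 < M) (hN : 0 < N)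
    (C : Ω → Fin M → Fin N → 𝒴)   -- the codebook (Y^N(1), ..., Y^N(M))
    (W : Ω → Fin M)               -- the item to be identified
    (Z : Ω → Fin N → 𝒵)           -- the observation
    (hCm : Measurable C) (hWm : Measurable W) (hZm : Measurable Z)
    -- W is uniformly distributed on {1,...,M}
    (hWunif : ∀ w : Fin M, μ {ω | W ω = w} = (M : ENNReal)⁻¹)
    -- W is independent of the codebook
    (hWindep : ∀ (w : Fin M) (c : Fin M → Fin N → 𝒴),
      μ {ω | W ω = w ∧ C ω = c} = μ {ω | W ω = w} * μ {ω | C ω = c})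
    -- Z^N is conditionally independent of (W, C) given Y^N(W)
    (hCI : ∀ (w : Fin M) (c : Fin M → Fin N → 𝒴) (z : Fin N → 𝒵),
      μ {ω | Z ω = z ∧ W ω = w ∧ C ω = c} * μ {ω | C ω (W ω) = c w}
        = μ {ω | Z ω = z ∧ C ω (W ω) = c w} * μ {ω | W ω = w ∧ C ω = c}) :
    mutualInfo2 μ W (fun ω => (Z ω, C ω))
      ≤ entropy2 μ Z - condEntropy2 μ Z (fun ω => C ω (W ω)) := by
  have hVm : Measurable fun ω => (W ω, Z ω, C ω) := hWm.prodMk (hZm.prodMk hCm)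
  have hC := entropy2_comp_eq_sum (μ := μ) hVm fun v => v.2.2
  have hW := entropy2_comp_eq_sum (μ := μ) hVm fun v => v.1
  have hY := entropy2_comp_eq_sum (μ := μ) hVm fun v => v.2.2 v.1
  have hZY := entropy2_comp_eq_sum (μ := μ) hVm fun v => (v.2.1, v.2.2 v.1)
  have hV : entropy2 μ (fun ω => (W ω, Z ω, C ω)) + entropy2 μ (fun ω => C ω (W ω))
      = entropy2 μ (fun ω => (Z ω, C ω (W ω))) + entropy2 μ W + entropy2 μ C := by
    rw [hC, hW, hY, hZY, entropy2]
    simp only [← neg_add, ← Finset.sum_add_distrib, ← mul_add]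
    congr 1
    refine Finset.sum_congr rfl fun v _ => ?_
    obtain ⟨w, z, c⟩ := v
    rcases (prMass_nonneg (μ := μ) (fun ω => (W ω, Z ω, C ω)) (w, z, c)).eq_or_lt with h0 | h0
    · rw [← h0, zero_mul, zero_mul]
    have hWpos := prMass_comp_ne_zero h0 fun v => v.1
    have hCpos := prMass_comp_ne_zero h0 fun v => v.2.2
    have hYpos := prMass_comp_ne_zero h0 fun v => v.2.2 v.1
    have hZYpos := prMass_comp_ne_zero h0 fun v => (v.2.1, v.2.2 v.1)
    have hmul : prMass μ (fun ω => (W ω, Z ω, C ω)) (w, z, c)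
          * prMass μ (fun ω => C ω (W ω)) (c w)
        = prMass μ (fun ω => (Z ω, C ω (W ω))) (z, c w) * prMass μ W w * prMass μ C c := by
      have h := congrArg ENNReal.toReal (hCI w c z)
      rw [hWindep] at h
      simp only [ENNReal.toReal_mul, ← mul_assoc] at h
      simpa only [prMass, Prod.mk.injEq, and_left_comm] using h
    congr 1
    rw [← Real.logb_mul h0.ne' hYpos, hmul, Real.logb_mul (mul_ne_zero hZYpos hWpos) hCpos,
      Real.logb_mul hZYpos hWpos]
  have hZC := entropy2_prod_le (μ := μ) hZm hCm
  rw [mutualInfo2, condEntropy2]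
  linarith
end

section
/- Let V_X > 0, Δ ≥ 0 and V_N > 0. Let X be a Gaussian random variable with mean 0 and variance V_X, set Y = f·X with f = 1 + √(Δ/V_X), let G be a Gaussian random variable with mean 0 and variance V_N independent of X, and set Z = Y + G. Then E[(X − Y)²] = Δ and the mutual information I(Y;Z), defined as the Kullback–Leibler divergence of the joint law of (Y,Z) from the product of its marginals, equals (1/2) ln(1 + (√V_X + √Δ)²/V_N) (in nats). -/
open MeasureTheory ProbabilityTheory
open scoped Classical

/-- Kullback–Leibler divergence `D(μ‖ν)` in nats: `∫ log(dμ/dν) dμ` when `μ ≪ ν` and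
the log-likelihood ratio is `μ`-integrable, and `⊤` otherwise. -/
noncomputable def klDiv' {α : Type*} [MeasurableSpace α] (μ ν : Measure α) : EReal :=
  if μ ≪ ν ∧ Integrable (llr μ ν) μ then ((∫ x, llr μ ν x ∂μ : ℝ) : EReal) else ⊤

/-- Mutual information (in nats) of two real-valued random variables, defined as the
KL divergence of the joint law from the product of the marginal laws. -/
noncomputable def miReal {Ω : Type*} [MeasurableSpace Ω] (μ : Measure Ω)
    (U V : Ω → ℝ) : EReal :=
  klDiv' (μ.map (fun ω => (U ω, V ω))) ((μ.map U).prod (μ.map V))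

open scoped ENNReal NNReal

/-- A Gaussian law has density `gaussianPDFReal m v / gaussianPDFReal m' w` with respect to any
nondegenerate Gaussian law. -/
lemma gaussianReal_eq_withDensity_gaussianReal (m m' : ℝ) {v w : ℝ≥0} (hv : v ≠ 0) (hw : w ≠ 0) :
    gaussianReal m v = (gaussianReal m' w).withDensity
      (fun x => ENNReal.ofReal (gaussianPDFReal m v x / gaussianPDFReal m' w x)) := by
  have hdens : Measurable
      (fun x => ENNReal.ofReal (gaussianPDFReal m v x / gaussianPDFReal m' w x)) := by fun_prop
  rw [gaussianReal_of_var_ne_zero m hv, gaussianReal_of_var_ne_zero m' hw,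
    ← withDensity_mul _ (measurable_gaussianPDF _ _) hdens]
  congr 1
  ext x
  have hpos := gaussianPDFReal_pos m' w x hw
  rw [Pi.mul_apply, gaussianPDF, gaussianPDF, ← ENNReal.ofReal_mul hpos.le,
    mul_div_cancel₀ _ hpos.ne']

lemma measurable_gaussianPDFReal_div_uncurry (v w : ℝ≥0) :
    Measurable (fun p : ℝ × ℝ => gaussianPDFReal p.1 v p.2 / gaussianPDFReal 0 w p.2) := by
  unfold gaussianPDFReal
  fun_prop

/-- The joint law of `(Y, Y + G)` for Gaussian noise `G` independent of `Y`, as a density with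
respect to the product of the law of `Y` and a centred Gaussian law. -/
lemma map_prodMk_add_gaussianReal_eq_withDensity {Ω : Type*} [MeasurableSpace Ω] {μ : Measure Ω}
    [IsProbabilityMeasure μ] {Y G : Ω → ℝ} (hY : Measurable Y) (hG : Measurable G)
    (hYG : IndepFun Y G μ) {v w : ℝ≥0} (hv : v ≠ 0) (hw : w ≠ 0)
    (hGlaw : μ.map G = gaussianReal 0 v) :
    μ.map (fun ω => (Y ω, Y ω + G ω)) = ((μ.map Y).prod (gaussianReal 0 w)).withDensity
      (fun p => ENNReal.ofReal (gaussianPDFReal p.1 v p.2 / gaussianPDFReal 0 w p.2)) := by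
  have hprob : IsProbabilityMeasure (μ.map Y) := Measure.isProbabilityMeasure_map hY.aemeasurable
  have hjoint : μ.map (fun ω => (Y ω, G ω)) = (μ.map Y).prod (gaussianReal 0 v) := by
    rw [← hGlaw]
    exact (indepFun_iff_map_prod_eq_prod_map_map hY.aemeasurable hG.aemeasurable).1 hYG
  have hshear : Measurable (fun p : ℝ × ℝ => (p.1, p.1 + p.2)) := by fun_prop
  have hcomp : μ.map (fun ω => (Y ω, Y ω + G ω))
      = ((μ.map Y).prod (gaussianReal 0 v)).map (fun p => (p.1, p.1 + p.2)) := by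
    rw [← hjoint, Measure.map_map hshear (hY.prodMk hG)]
    rfl
  have hdens := (measurable_gaussianPDFReal_div_uncurry v w).ennreal_ofReal
  ext s hs
  rw [hcomp, Measure.map_apply hshear hs, Measure.prod_apply (hshear hs),
    withDensity_apply _ hs, ← lintegral_indicator hs,
    lintegral_prod _ (hdens.indicator hs).aemeasurable]
  refine lintegral_congr fun y => ?_
  have hsec : MeasurableSet (Prod.mk y ⁻¹' s) := measurable_prodMk_left hs
  have hmap : gaussianReal y v = (gaussianReal 0 v).map (y + ·) := by
    rw [gaussianReal_map_const_add, zero_add]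
  calc gaussianReal 0 v (Prod.mk y ⁻¹' ((fun p : ℝ × ℝ => (p.1, p.1 + p.2)) ⁻¹' s))
      = gaussianReal y v (Prod.mk y ⁻¹' s) := by
        rw [hmap, Measure.map_apply (by fun_prop) hsec]
        rfl
    _ = _ := by
        rw [gaussianReal_eq_withDensity_gaussianReal y 0 hv hw, withDensity_apply _ hsec,
          ← lintegral_indicator hsec]
        rfl

lemma log_gaussianPDFReal (m : ℝ) {v : ℝ≥0} (hv : v ≠ 0) (x : ℝ) :
    Real.log (gaussianPDFReal m v x)
      = -(1 / 2 * Real.log (2 * Real.pi * v)) - (x - m) ^ 2 / (2 * v) := by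
  have hpos : 0 < 2 * Real.pi * (v : ℝ) := by positivity
  rw [gaussianPDFReal, Real.log_mul (by positivity) (Real.exp_ne_zero _), Real.log_exp,
    Real.log_inv, Real.log_sqrt hpos.le]
  ring

lemma log_gaussianPDFReal_div (m m' : ℝ) {v w : ℝ≥0} (hv : v ≠ 0) (hw : w ≠ 0) (x : ℝ) :
    Real.log (gaussianPDFReal m v x / gaussianPDFReal m' w x)
      = 1 / 2 * Real.log (w / v) - (x - m) ^ 2 / (2 * v) + (x - m') ^ 2 / (2 * w) := by
  have hv' : (v : ℝ) ≠ 0 := by exact_mod_cast hv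
  have hw' : (w : ℝ) ≠ 0 := by exact_mod_cast hw
  have hpi : 2 * Real.pi ≠ 0 := by positivity
  rw [Real.log_div (gaussianPDFReal_pos _ _ _ hv).ne' (gaussianPDFReal_pos _ _ _ hw).ne',
    log_gaussianPDFReal _ hv, log_gaussianPDFReal _ hw, Real.log_mul hpi hv',
    Real.log_mul hpi hw', Real.log_div hw' hv']
  ring

section CentredGaussian

variable {Ω : Type*} [MeasurableSpace Ω] {μ : Measure Ω} {X : Ω → ℝ} {v : ℝ≥0}

lemma integrable_sq_of_map_eq_gaussianReal (hX : Measurable X)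
    (hlaw : μ.map X = gaussianReal 0 v) : Integrable (fun ω => X ω ^ 2) μ := by
  have h : Integrable (fun x : ℝ => x ^ 2) (μ.map X) := by
    rw [hlaw]
    exact (memLp_id_gaussianReal 2).integrable_sq
  exact h.comp_measurable hX

lemma integral_sq_of_map_eq_gaussianReal (hX : Measurable X)
    (hlaw : μ.map X = gaussianReal 0 v) : ∫ ω, X ω ^ 2 ∂μ = v := by
  have hmap : ∫ x, x ^ 2 ∂(μ.map X) = ∫ ω, X ω ^ 2 ∂μ :=
    integral_map hX.aemeasurable (by fun_prop)
  rw [← hmap, hlaw, ← variance_fun_id_gaussianReal (μ := 0) (v := v),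
    variance_of_integral_eq_zero (by fun_prop) integral_id_gaussianReal]

end CentredGaussian

/-- The mutual information across an additive Gaussian noise channel with Gaussian input. -/
lemma miReal_add_gaussianReal {Ω : Type*} [MeasurableSpace Ω] {μ : Measure Ω}
    [IsProbabilityMeasure μ] {Y G : Ω → ℝ} (hY : Measurable Y) (hG : Measurable G)
    (hYG : IndepFun Y G μ) {a v : ℝ≥0} (hv : v ≠ 0)
    (hYlaw : μ.map Y = gaussianReal 0 a) (hGlaw : μ.map G = gaussianReal 0 v) :
    miReal μ Y (fun ω => Y ω + G ω) = ((1 / 2 * Real.log (1 + a / v) : ℝ) : EReal) := by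
  have hw : a + v ≠ 0 := by positivity
  have hv' : (v : ℝ) ≠ 0 := by exact_mod_cast hv
  have hw' : ((a + v : ℝ≥0) : ℝ) ≠ 0 := by exact_mod_cast hw
  have hZ : Measurable (fun ω => Y ω + G ω) := hY.add hG
  have hYZ : Measurable (fun ω => (Y ω, Y ω + G ω)) := hY.prodMk hZ
  have hZlaw : μ.map (fun ω => Y ω + G ω) = gaussianReal 0 (a + v) := by
    have h := gaussianReal_add_gaussianReal_of_indepFun hYG hYlaw hGlaw
    rwa [add_zero] at h
  have hprobY : IsProbabilityMeasure (μ.map Y) := Measure.isProbabilityMeasure_map hY.aemeasurable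
  set P := μ.map (fun ω => (Y ω, Y ω + G ω)) with hP
  set Q := (μ.map Y).prod (gaussianReal 0 (a + v))
  have hPQ : P = Q.withDensity _ :=
    map_prodMk_add_gaussianReal_eq_withDensity hY hG hYG hv hw hGlaw
  have hac : P ≪ Q := hPQ ▸ withDensity_absolutelyContinuous _ _
  let L : ℝ × ℝ → ℝ := fun p => 1 / 2 * Real.log ((a + v : ℝ≥0) / v)
    - (p.2 - p.1) ^ 2 / (2 * v) + p.2 ^ 2 / (2 * (a + v : ℝ≥0))
  have hL : Measurable L := by fun_prop
  have hllr : llr P Q =ᵐ[P] L := by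
    have hrn : P.rnDeriv Q =ᵐ[Q] fun p =>
        ENNReal.ofReal (gaussianPDFReal p.1 v p.2 / gaussianPDFReal 0 (a + v) p.2) := by
      rw [hPQ]
      exact Measure.rnDeriv_withDensity _
        (measurable_gaussianPDFReal_div_uncurry v (a + v)).ennreal_ofReal
    filter_upwards [hac.ae_le hrn] with p hp
    rw [llr, hp, ENNReal.toReal_ofReal
      (div_nonneg (gaussianPDFReal_nonneg _ _ _) (gaussianPDFReal_nonneg _ _ _)),
      log_gaussianPDFReal_div _ _ hv hw, sub_zero]
  have hLcomp : ∀ ω, L (Y ω, Y ω + G ω) = 1 / 2 * Real.log ((a + v : ℝ≥0) / v)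
      - G ω ^ 2 / (2 * v) + (Y ω + G ω) ^ 2 / (2 * (a + v : ℝ≥0)) := by
    intro ω
    simp only [L, add_sub_cancel_left]
  have hG2 := (integrable_sq_of_map_eq_gaussianReal hG hGlaw).div_const (2 * (v : ℝ))
  have hZ2 := (integrable_sq_of_map_eq_gaussianReal hZ hZlaw).div_const (2 * ((a + v : ℝ≥0) : ℝ))
  have hconst : Integrable (fun _ : Ω => 1 / 2 * Real.log ((a + v : ℝ≥0) / v)) μ :=
    integrable_const _
  have hint : Integrable (llr P Q) P := by
    rw [integrable_congr hllr, hP, integrable_map_measure hL.aestronglyMeasurable hYZ.aemeasurable]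
    exact ((hconst.sub hG2).add hZ2).congr (.of_forall fun ω => (hLcomp ω).symm)
  have hval : ∫ p, llr P Q p ∂P = 1 / 2 * Real.log (1 + a / v) := by
    rw [integral_congr_ae hllr, hP, integral_map hYZ.aemeasurable hL.aestronglyMeasurable]
    simp_rw [hLcomp]
    rw [integral_add (by exact hconst.sub hG2) hZ2, integral_sub hconst hG2, integral_div, integral_div,
      integral_sq_of_map_eq_gaussianReal hG hGlaw, integral_sq_of_map_eq_gaussianReal hZ hZlaw,
      integral_const, probReal_univ, one_smul]
    have hratio : ((a + v : ℝ≥0) : ℝ) / v = 1 + a / v := by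
      push_cast
      field_simp
      ring
    rw [hratio]
    field_simp
    ring
  rw [miReal, klDiv', hZlaw, if_pos ⟨hac, hint⟩, hval]

/-- if `X` is Gaussian with variance `V_X`, `Y = f·X` with
`f = 1 + √(Δ/V_X)`, and `Z = Y + G` with `G` Gaussian noise of variance `V_N`
independent of `X`, then `E[(X − Y)²] = Δ` and
`I(Y;Z) = (1/2) ln(1 + (√V_X + √Δ)²/V_N)` (in nats). -/
theorem stmt10
    {Ω : Type*} [MeasurableSpace Ω] (μ : Measure Ω) [IsProbabilityMeasure μ]
    (V_X Δ V_N : ℝ) (hVX : 0 < V_X) (hΔ : 0 ≤ Δ) (hVN : 0 < V_N)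
    (X G : Ω → ℝ) (hXm : Measurable X) (hGm : Measurable G)
    (hXlaw : μ.map X = gaussianReal 0 V_X.toNNReal)
    (hGlaw : μ.map G = gaussianReal 0 V_N.toNNReal)
    (hindep : IndepFun X G μ)
    (f : ℝ) (hf : f = 1 + Real.sqrt (Δ / V_X))
    (Y Z : Ω → ℝ) (hY : Y = fun ω => f * X ω) (hZ : Z = fun ω => Y ω + G ω) :
    (∫ ω, (X ω - Y ω) ^ 2 ∂μ = Δ)
    ∧ miReal μ Y Z
        = ((1 / 2 * Real.log (1 + (Real.sqrt V_X + Real.sqrt Δ) ^ 2 / V_N) : ℝ) : EReal) := by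
  have hlaw_mul : ∀ c : ℝ, μ.map (fun ω => c * X ω)
      = gaussianReal 0 (c ^ 2 * V_X).toNNReal := by
    intro c
    have h := gaussianReal_map_const_mul (μ := 0) (v := V_X.toNNReal) c
    rw [← hXlaw, Measure.map_map (by fun_prop) hXm, mul_zero] at h
    refine h.trans (congrArg _ (NNReal.eq ?_))
    rw [NNReal.coe_mul, Real.coe_toNNReal _ hVX.le, Real.coe_toNNReal _ (by positivity)]
    rfl
  have hfac : f * Real.sqrt V_X = Real.sqrt V_X + Real.sqrt Δ := by
    rw [hf, Real.sqrt_div hΔ, add_mul, one_mul, div_mul_cancel₀ _ (Real.sqrt_pos.2 hVX).ne']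
  subst hY hZ
  constructor
  · have h := integral_sq_of_map_eq_gaussianReal (by fun_prop) (hlaw_mul (1 - f))
    calc ∫ ω, (X ω - f * X ω) ^ 2 ∂μ = ∫ ω, ((1 - f) * X ω) ^ 2 ∂μ := by
          congr with ω
          ring
      _ = (1 - f) ^ 2 * V_X := by
          rw [h, Real.coe_toNNReal _ (by positivity)]
      _ = Δ := by
          rw [hf, sub_add_cancel_left, neg_sq, Real.sq_sqrt (by positivity),
            div_mul_cancel₀ _ hVX.ne']
  · have hindep' : IndepFun (fun ω => f * X ω) G μ :=
      hindep.comp (measurable_const_mul f) measurable_id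
    rw [miReal_add_gaussianReal (by fun_prop) hGm hindep' (Real.toNNReal_pos.2 hVN).ne'
      (hlaw_mul f) hGlaw, ← hfac, mul_pow, Real.sq_sqrt hVX.le,
      Real.coe_toNNReal _ (by positivity), Real.coe_toNNReal _ hVN.le]
end
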